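/- Fix a real number c with 0 ≤ c < 1 and set ξ∧ = 4√(1−c²)/(3(1+c)). Then ψ₃(0,ξ∧) = 0 and ψ₃(t,ξ∧) ≥ 0 for all t ∈ [−1,1]; moreover, for every ξ > 0 such that ψ₃(t,ξ) ≥ 0 for all t ∈ [−1,1], sup over t ∈ [−1,1] of |ψ₃(t,ξ)| is at least sup over t ∈ [−1,1] of |ψ₃(t,ξ∧)|; i.e., ξ∧ induces the optimal outer cubic G¹ approximant. -/

import Mathlib

/-- Simplified radial error of the cubic G¹ Bézier approximant of the unit circular arc. -/
noncomputable def psi3 (c t ξ : ℝ) : ℝ :=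
  (1/16) * (1 - t^2)^2 *
    (9*ξ^2*(c^2*t^2 + 1 - c^2) + 12*ξ*(2 - t^2)*c*Real.sqrt (1 - c^2)
      - 4*(4 - t^2)*(1 - c^2))

/-- Sup over `t ∈ [−1,1]` of `|f t|`. -/
noncomputable def errSup (f : ℝ → ℝ) : ℝ :=
  sSup ((fun t => |f t|) '' Set.Icc (-1 : ℝ) 1)

/-- `ξ∧ = 4√(1−c²)/(3(1+c))` induces the optimal outer cubic G¹ approximant. -/
theorem stmt_4 (c : ℝ) (hc0 : 0 ≤ c) (hc1 : c < 1) :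
    psi3 c 0 (4*Real.sqrt (1 - c^2)/(3*(1 + c))) = 0 ∧
    (∀ t ∈ Set.Icc (-1 : ℝ) 1, 0 ≤ psi3 c t (4*Real.sqrt (1 - c^2)/(3*(1 + c)))) ∧
    ∀ ξ > (0 : ℝ), (∀ t ∈ Set.Icc (-1 : ℝ) 1, 0 ≤ psi3 c t ξ) →
      errSup (fun t => psi3 c t (4*Real.sqrt (1 - c^2)/(3*(1 + c)))) ≤
        errSup (fun t => psi3 c t ξ) := by
  have hpos : 0 < 1 - c^2 := by nlinarith
  have key : ∀ t ξ : ℝ, psi3 c t ξ = (1/16) * (1 - t^2)^2 *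
      (t^2 * (3*ξ*c - 2*Real.sqrt (1 - c^2))^2 + (9*ξ^2*(1-c^2)
        + 24*ξ*c*Real.sqrt (1 - c^2) - 16*(1-c^2))) := by
    intro t ξ
    have h2 := Real.sq_sqrt hpos.le
    unfold psi3
    linear_combination (-(1/16) * (1 - t^2)^2 * t^2 * 4) * h2
  have hz : 9*(4*Real.sqrt (1 - c^2)/(3*(1 + c)))^2*(1-c^2)
        + 24*(4*Real.sqrt (1 - c^2)/(3*(1 + c)))*c*Real.sqrt (1 - c^2) - 16*(1-c^2) = 0 := by
    have h2 := Real.sq_sqrt hpos.le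
    have h3 : (1 + c) ≠ 0 := by positivity
    field_simp
    simp only [h2]
    ring
  have hs : 0 < Real.sqrt (1 - c^2) := Real.sqrt_pos.2 hpos
  have hx : 0 < 4*Real.sqrt (1 - c^2)/(3*(1 + c)) := by positivity
  generalize 4*Real.sqrt (1 - c^2)/(3*(1 + c)) = x at *
  have hnn : ∀ t ∈ Set.Icc (-1 : ℝ) 1, 0 ≤ psi3 c t x := by
    intro t _
    rw [key, hz]
    positivity
  refine ⟨by rw [key, hz]; ring, hnn, ?_⟩
  intro ξ hξ h
  have h0 := h 0 (by simp)
  rw [key] at h0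
  have hle : x ≤ ξ := by
    by_contra! hlt
    have h1 : ξ^2 * (1-c^2) < x^2 * (1-c^2) := by gcongr
    have h2 : ξ * (c*Real.sqrt (1 - c^2)) ≤ x * (c*Real.sqrt (1 - c^2)) := by gcongr
    nlinarith
  unfold errSup
  apply csSup_le
  · exact (Set.nonempty_Icc.2 (by norm_num)).image _
  rintro _ ⟨t, ht, rfl⟩
  have hb : BddAbove ((fun t => |psi3 c t ξ|) '' Set.Icc (-1 : ℝ) 1) := by
    apply (isCompact_Icc.image _).bddAbove
    unfold psi3
    fun_prop
  refine le_trans ?_ (le_csSup hb ⟨t, ht, rfl⟩)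
  simp only
  rw [abs_of_nonneg (hnn t ht), abs_of_nonneg (h t ht)]
  have ht2 : t^2 ≤ 1 := by nlinarith [ht.1, ht.2]
  have ha : 0 ≤ c^2*t^2 + 1 - c^2 := by nlinarith [mul_nonneg (sq_nonneg c) (sq_nonneg t)]
  have hb : 0 ≤ 2 - t^2 := by linarith
  unfold psi3
  gcongr
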